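/- Let n be a natural number and let Hₙ be the n-th physicists' Hermite polynomial, defined recursively by H₀(q) = 1 and H_{n+1}(q) = 2q·Hₙ(q) − Hₙ'(q). Then the function f : ℝ → ℝ given by f(q) = exp(−q²/2)·Hₙ(q) satisfies −f''(q) + q²·f(q) = (2n + 1)·f(q) for all q ∈ ℝ. -/

import Mathlib

/-- The physicists' Hermite polynomials: H₀(q) = 1, H_{n+1}(q) = 2q·Hₙ(q) − Hₙ'(q). -/
noncomputable def physHermite : ℕ → ℝ → ℝ
  | 0 => fun _ => 1
  | n + 1 => fun q => 2 * q * physHermite n q - deriv (physHermite n) q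

open scoped ContDiff in
theorem contDiff_physHermite (n : ℕ) : ContDiff ℝ ∞ (physHermite n) := by
  induction n with
  | zero => exact contDiff_const
  | succ n ih =>
    have hderiv : ContDiff ℝ ∞ (deriv (physHermite n)) := (contDiff_infty_iff_deriv.1 ih).2
    exact ((contDiff_const.mul contDiff_id).mul ih).sub hderiv

theorem differentiable_physHermite (n : ℕ) : Differentiable ℝ (physHermite n) :=
  (contDiff_physHermite n).differentiable (by simp)

theorem differentiable_deriv_physHermite (n : ℕ) : Differentiable ℝ (deriv (physHermite n)) :=
  (contDiff_infty_iff_deriv.1 (contDiff_physHermite n)).2.differentiable (by simp)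

theorem deriv_physHermite_succ_eq_add_sub (n : ℕ) (q : ℝ) :
    deriv (physHermite (n + 1)) q =
      2 * physHermite n q + 2 * q * deriv (physHermite n) q - deriv (deriv (physHermite n)) q := by
  have h := ((((hasDerivAt_id q).const_mul 2).mul (differentiable_physHermite n q).hasDerivAt).sub
    (differentiable_deriv_physHermite n q).hasDerivAt)
  exact h.deriv.trans (by simp)

/-- Hermite's differential equation `H'' = 2 q H' - 2 n H`. -/
theorem deriv_deriv_physHermite (n : ℕ) (q : ℝ) :
    deriv (deriv (physHermite n)) q =
      2 * q * deriv (physHermite n) q - 2 * n * physHermite n q := by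
  induction n generalizing q with
  | zero => simp [physHermite]
  | succ n ih =>
    have hderiv : deriv (physHermite (n + 1)) = fun x => 2 * (n + 1) * physHermite n x := by
      funext x
      rw [deriv_physHermite_succ_eq_add_sub, ih]
      ring
    rw [hderiv, deriv_const_mul _ (differentiable_physHermite n q)]
    simp only [physHermite]
    push_cast
    ring

theorem hasDerivAt_exp_neg_sq_half_mul {g : ℝ → ℝ} {g' q : ℝ} (hg : HasDerivAt g g' q) :
    HasDerivAt (fun x => Real.exp (-x ^ 2 / 2) * g x)
      (Real.exp (-q ^ 2 / 2) * (g' - q * g q)) q := by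
  have h : HasDerivAt (fun x : ℝ => -x ^ 2 / 2) (-q) q :=
    ((hasDerivAt_pow 2 q).neg.div_const 2).congr_deriv (by push_cast; ring)
  exact (h.exp.mul hg).congr_deriv (by ring)

/-- Equations (140)-(141): Ψₙ = e^{-q²/2}Hₙ(q) is a harmonic-oscillator eigenfunction
with eigenvalue ε = 2n + 1. -/
theorem hermite_oscillator_eigenfunction (n : ℕ) (f : ℝ → ℝ)
    (hf : ∀ q : ℝ, f q = Real.exp (-q ^ 2 / 2) * physHermite n q) :
    ∀ q : ℝ, -deriv (deriv f) q + q ^ 2 * f q = (2 * n + 1) * f q := by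
  intro q
  obtain rfl : f = fun x => Real.exp (-x ^ 2 / 2) * physHermite n x := funext hf
  have hH (x : ℝ) := (differentiable_physHermite n x).hasDerivAt
  have hderiv : deriv (fun x => Real.exp (-x ^ 2 / 2) * physHermite n x) = fun x =>
      Real.exp (-x ^ 2 / 2) * (deriv (physHermite n) x - x * physHermite n x) :=
    funext fun x => (hasDerivAt_exp_neg_sq_half_mul (hH x)).deriv
  have hderiv₂ := hasDerivAt_exp_neg_sq_half_mul
    ((differentiable_deriv_physHermite n q).hasDerivAt.sub ((hasDerivAt_id' q).mul (hH q)))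
  rw [hderiv]
  refine (congrArg (fun y => -y + _) hderiv₂.deriv).trans ?_
  simp only [Pi.sub_apply, Pi.mul_apply, deriv_deriv_physHermite]
  ring
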